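/- Let n ≥ 4 be even, c_W = n−1, h = n/2 − 1, let ν ≥ 2, and let c_R be an integer with 2 ≤ c_R ≤ n−1; set c := c_W + c_R − n = c_R − 1 and assume c ≥ 2ν − 1. Then there exists K_0 such that for every K ≥ K_0 with (c − 2(ν−1)) dividing K, there exists an (n, n−1, c_R, ν, n/2−1, 2^K, q) multi-version code with side information whose storage cost is log₂ q = K/(c − 2(ν−1)) bits (this is the cost of Construction 2, in which server i stores K/(c−2(ν−1)) bits of the single version L_{S(i)} := max{u ∈ S(i) : |A_S(u) ∩ H_i| ≥ n−2} and nothing of any other version). -/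

import Mathlib

open Finset

/-- The `h`-hop neighborhood `H_i = {i-h, …, i+h}` of server `i` on the ring `ZMod n`. -/
noncomputable def nbhd (n h : ℕ) (i : ZMod n) : Finset (ZMod n) :=
  (Finset.Icc (-(h : ℤ)) (h : ℤ)).image (fun d : ℤ => (i + (d : ZMod n)))

/-- The set `A_S(u)` of servers that received version `u` in state `S`. -/
def received (n ν : ℕ) [NeZero n] (S : ZMod n → Finset (Fin ν)) (u : Fin ν) :
    Finset (ZMod n) :=
  Finset.univ.filter (fun j => u ∈ S j)

/-- An `(n, c_W, c_R, ν, h, 2^K, q)` multi-version code with side information.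
Servers are indexed by `ZMod n`, versions by `Fin ν` (higher index = later version),
message values are `K`-bit strings `Fin K → Bool`, and stored symbols lie in `Fin q`.
The encoder of server `i` may depend only on the states of the servers in its
`h`-hop neighborhood and on the values of the versions that server `i` received;
the decoder for a set `T` of `c_R` servers may depend only on the symbols stored by
the servers of `T`, and must return the value of some version at least as late as the
latest complete version whenever a complete version exists (and `NULL`, i.e. `none`,
otherwise). -/
structure MVCode (n cW cR ν h K q : ℕ) [NeZero n] where
  enc : ZMod n → (ZMod n → Finset (Fin ν)) → (Fin ν → (Fin K → Bool)) → Fin q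
  dec : (ZMod n → Finset (Fin ν)) → Finset (ZMod n) → (ZMod n → Fin q) →
    Option (Fin K → Bool)
  enc_local_state : ∀ (i : ZMod n) (S S' : ZMod n → Finset (Fin ν))
      (W : Fin ν → Fin K → Bool),
    (∀ j ∈ nbhd n h i, S j = S' j) → enc i S W = enc i S' W
  enc_local_word : ∀ (i : ZMod n) (S : ZMod n → Finset (Fin ν))
      (W W' : Fin ν → Fin K → Bool),
    (∀ u ∈ S i, W u = W' u) → enc i S W = enc i S W'
  dec_local : ∀ (S : ZMod n → Finset (Fin ν)) (T : Finset (ZMod n))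
      (X X' : ZMod n → Fin q),
    (∀ j ∈ T, X j = X' j) → dec S T X = dec S T X'
  dec_correct : ∀ (S : ZMod n → Finset (Fin ν)) (W : Fin ν → Fin K → Bool)
      (T : Finset (ZMod n)), T.card = cR →
    (∃ u : Fin ν, cW ≤ (received n ν S u).card) →
    ∃ m : Fin ν, (∀ u : Fin ν, cW ≤ (received n ν S u).card → u ≤ m) ∧
      dec S T (fun j => enc j S W) = some (W m)
  dec_null : ∀ (S : ZMod n → Finset (Fin ν)) (W : Fin ν → Fin K → Bool)
      (T : Finset (ZMod n)), T.card = cR →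
    (∀ u : Fin ν, (received n ν S u).card < cW) →
    dec S T (fun j => enc j S W) = none

/-- With `h = n/2 - 1`, the neighborhood misses exactly the antipode. -/
lemma mem_nbhd_iff (n : ℕ) [NeZero n] (hn : 4 ≤ n) (heven : Even n) (i j : ZMod n) :
    j ∈ nbhd n (n / 2 - 1) i ↔ j ≠ i + ((n / 2 : ℕ) : ZMod n) := by
  obtain ⟨t, ht⟩ := heven
  have ht2 : n / 2 = t := by omega
  rw [ht2]
  unfold nbhd
  rw [Finset.mem_image]
  constructor
  · rintro ⟨d, hd, rfl⟩ h
    rw [Finset.mem_Icc] at hd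
    have h1 : ((d - t : ℤ) : ZMod n) = 0 := by
      push_cast
      rw [add_left_cancel h]
      simp
    rw [ZMod.intCast_zmod_eq_zero_iff_dvd] at h1
    obtain ⟨e, he⟩ := h1
    have hlt : d - t < 0 := by omega
    have hgt : -(n : ℤ) < d - t := by omega
    rw [he] at hlt hgt
    have hn0 : (0 : ℤ) < n := by omega
    have e1 : e < 0 := by nlinarith
    have e2 : -1 < e := by nlinarith
    omega
  · intro h
    have hm := ZMod.valMinAbs_mem_Ioc (j - i)
    have hc := ZMod.coe_valMinAbs (j - i)
    rw [Set.mem_Ioc] at hm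
    refine ⟨(j - i).valMinAbs, ?_, ?_⟩
    · rw [Finset.mem_Icc]
      have hne : (j - i).valMinAbs ≠ t := by
        intro h'
        apply h
        rw [h'] at hc
        have : ((t : ℕ) : ZMod n) = j - i := by exact_mod_cast hc
        rw [this]; ring
      omega
    · rw [hc]; ring

/-- The candidate versions server `i` may store. -/
noncomputable def cand (n ν : ℕ) [NeZero n] (S : ZMod n → Finset (Fin ν)) (i : ZMod n) :
    Finset (Fin ν) :=
  (S i).filter (fun u => n - 2 ≤ (received n ν S u ∩ nbhd n (n / 2 - 1) i).card)

lemma cand_local (n ν : ℕ) [NeZero n] (hn : 4 ≤ n) (heven : Even n)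
    (S S' : ZMod n → Finset (Fin ν)) (i : ZMod n)
    (h : ∀ j ∈ nbhd n (n / 2 - 1) i, S j = S' j) : cand n ν S i = cand n ν S' i := by
  have hi : i ∈ nbhd n (n / 2 - 1) i := by
    unfold nbhd
    rw [Finset.mem_image]
    exact ⟨0, by simp, by simp⟩
  unfold cand
  rw [h i hi]
  congr 1
  funext u
  have : received n ν S u ∩ nbhd n (n / 2 - 1) i = received n ν S' u ∩ nbhd n (n / 2 - 1) i := by
    ext j
    simp only [received, Finset.mem_inter, Finset.mem_filter, Finset.mem_univ, true_and]
    constructor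
    · rintro ⟨a, b⟩; exact ⟨h j b ▸ a, b⟩
    · rintro ⟨a, b⟩; exact ⟨(h j b).symm ▸ a, b⟩
  rw [this]

lemma nbhd_eq (n : ℕ) [NeZero n] (hn : 4 ≤ n) (heven : Even n) (i : ZMod n) :
    nbhd n (n / 2 - 1) i = Finset.univ.erase (i + ((n / 2 : ℕ) : ZMod n)) := by
  ext j
  rw [mem_nbhd_iff n hn heven]
  simp

lemma complete_mem_cand (n ν : ℕ) [NeZero n] (hn : 4 ≤ n) (heven : Even n)
    (S : ZMod n → Finset (Fin ν)) (i : ZMod n) (u : Fin ν) (hu : u ∈ S i)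
    (hc : n - 1 ≤ (received n ν S u).card) : u ∈ cand n ν S i := by
  unfold cand
  rw [Finset.mem_filter]
  refine ⟨hu, ?_⟩
  rw [nbhd_eq n hn heven, Finset.inter_erase, Finset.inter_univ]
  have := Finset.pred_card_le_card_erase (s := received n ν S u) (a := i + ((n / 2 : ℕ) : ZMod n))
  omega

/-- An incomplete version is a candidate at no more than two servers. -/
lemma card_incomplete (n ν : ℕ) [NeZero n] (hn : 4 ≤ n) (heven : Even n)
    (S : ZMod n → Finset (Fin ν)) (u : Fin ν)
    (hc : (received n ν S u).card < n - 1) :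
    (Finset.univ.filter (fun j => u ∈ cand n ν S j)).card ≤ 2 := by
  classical
  have hcomp : (received n ν S u)ᶜ.card = n - (received n ν S u).card := by
    rw [Finset.card_compl, ZMod.card]
  have key : ∀ j, u ∈ cand n ν S j →
      (j + ((n / 2 : ℕ) : ZMod n)) ∉ received n ν S u ∧ n - 2 ≤ (received n ν S u).card := by
    intro j hj
    unfold cand at hj
    rw [Finset.mem_filter, nbhd_eq n hn heven, Finset.inter_erase, Finset.inter_univ] at hj
    have h2 := hj.2
    constructor
    · intro hm
      rw [Finset.card_erase_of_mem hm] at h2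
      omega
    · exact h2.trans (Finset.card_le_card (Finset.erase_subset _ _))
  rcases (Finset.univ.filter (fun j => u ∈ cand n ν S j)).eq_empty_or_nonempty with h | ⟨j0, hj0⟩
  · rw [h]; simp
  · have h0 := (key j0 (Finset.mem_filter.1 hj0).2).2
    calc _ ≤ (received n ν S u)ᶜ.card := by
          apply Finset.card_le_card_of_injOn (fun j => j + ((n / 2 : ℕ) : ZMod n))
          · intro j hj
            have hj' := (key j (Finset.mem_filter.1 hj).2).1
            simpa using hj'
          · intro a _ b _ hab
            exact add_right_cancel hab
      _ ≤ 2 := by omega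

/-- At least `cR - 1 - 2(ν-1)` servers of `T` store the latest complete version. -/
lemma card_store (n ν cR : ℕ) [NeZero n] (hn : 4 ≤ n) (heven : Even n)
    (S : ZMod n → Finset (Fin ν)) (L : Fin ν) (hL : n - 1 ≤ (received n ν S L).card)
    (hmax : ∀ u, n - 1 ≤ (received n ν S u).card → u ≤ L)
    (T : Finset (ZMod n)) (hT : T.card = cR) :
    cR - 1 - 2 * (ν - 1) ≤ (T.filter (fun j => (cand n ν S j).max = (L : WithBot (Fin ν)))).card := by
  classical
  set G := T.filter (fun j => (cand n ν S j).max = (L : WithBot (Fin ν)))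
  set B := (Finset.univ.erase L).filter (fun u => L < u)
  have hsub : T ⊆ (G ∪ (received n ν S L)ᶜ) ∪
      B.biUnion (fun u => Finset.univ.filter (fun j => u ∈ cand n ν S j)) := by
    intro j hj
    by_cases hLj : L ∈ S j
    · have hc := complete_mem_cand n ν hn heven S j L hLj hL
      obtain ⟨m, hm⟩ := Finset.max_of_mem hc
      have hle : L ≤ m := Finset.le_max_of_eq hc hm
      rcases hle.eq_or_lt with h | h
      · subst h
        exact Finset.mem_union_left _ (Finset.mem_union_left _ (Finset.mem_filter.2 ⟨hj, hm⟩))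
      · apply Finset.mem_union_right
        rw [Finset.mem_biUnion]
        exact ⟨m, by simp [B, h, h.ne'], by simpa using Finset.mem_of_max hm⟩
    · apply Finset.mem_union_left
      apply Finset.mem_union_right
      simp [received, hLj]
  have h1 := Finset.card_le_card hsub
  have h2 := h1.trans (Finset.card_union_le _ _)
  have h3 := Finset.card_union_le G (received n ν S L)ᶜ
  have h4 : (received n ν S L)ᶜ.card = n - (received n ν S L).card := by
    rw [Finset.card_compl, ZMod.card]
  have h5 : (B.biUnion (fun u => Finset.univ.filter (fun j => u ∈ cand n ν S j))).card
      ≤ B.card * 2 := by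
    apply Finset.card_biUnion_le_card_mul
    intro u hu
    apply card_incomplete n ν hn heven
    by_contra hcon
    have := hmax u (by omega)
    have hu2 := (Finset.mem_filter.1 hu).2
    exact absurd this (not_le.2 hu2)
  have h6 : B.card ≤ ν - 1 := by
    refine (Finset.card_filter_le _ _).trans ?_
    simp
  omega

/-- Existence of MDS codes. -/
lemma exists_mds (n k m : ℕ) [NeZero n] (hm : n ≤ m) :
    ∃ code : ZMod n → (Fin (k * m) → Bool) → Fin (2 ^ m),
      ∀ (G : Finset (ZMod n)) (w w' : Fin (k * m) → Bool), k ≤ G.card →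
        (∀ j ∈ G, code j w = code j w') → w = w' := by
  classical
  have hn0 : n ≠ 0 := NeZero.ne n
  have hm0 : m ≠ 0 := by omega
  let F := GaloisField 2 m
  haveI : Finite F := inferInstance
  haveI : Fintype F := Fintype.ofFinite F
  have hF : Fintype.card F = 2 ^ m := by
    rw [← Nat.card_eq_fintype_card]; exact GaloisField.card 2 m hm0
  let eF : F ≃ Fin (2 ^ m) := Fintype.equivFinOfCardEq hF
  have hemb : Nonempty (ZMod n ↪ F) := by
    apply Function.Embedding.nonempty_of_card_le
    rw [ZMod.card, hF]
    exact hm.trans Nat.lt_two_pow_self.le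
  obtain ⟨pt⟩ := hemb
  have hmsg : Fintype.card (Fin (k * m) → Bool) = Fintype.card (Fin k → F) := by
    simp only [Fintype.card_fun, Fintype.card_bool, Fintype.card_fin, hF]
    rw [← pow_mul, mul_comm]
  let em : (Fin (k * m) → Bool) ≃ (Fin k → F) := Fintype.equivOfCardEq hmsg
  let poly : (Fin (k * m) → Bool) → Polynomial F :=
    fun w => ((Polynomial.degreeLTEquiv F k).symm (em w) : Polynomial F)
  refine ⟨fun j w => eF ((poly w).eval (pt j)), ?_⟩
  intro G w w' hG h
  have hp : poly w = poly w' := by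
    apply Polynomial.eq_of_degrees_lt_of_eval_finset_eq (G.map pt)
    · rw [Finset.card_map]
      exact (Polynomial.mem_degreeLT.1 ((Polynomial.degreeLTEquiv F k).symm (em w)).2).trans_le
        (by exact_mod_cast hG)
    · rw [Finset.card_map]
      exact (Polynomial.mem_degreeLT.1 ((Polynomial.degreeLTEquiv F k).symm (em w')).2).trans_le
        (by exact_mod_cast hG)
    · intro x hx
      obtain ⟨j, hj, rfl⟩ := Finset.mem_map.1 hx
      exact eF.injective (h j hj)
  exact em.injective ((Polynomial.degreeLTEquiv F k).symm.injective (Subtype.ext hp))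


/-- Construction 2: for `n ≥ 4` even, `c_W = n-1`, `h = n/2 - 1`,
`ν ≥ 2`, `2 ≤ c_R ≤ n-1` and `c := c_R - 1 ≥ 2ν - 1`, there is `K₀` such that for all
`K ≥ K₀` with `(c - 2(ν-1)) ∣ K` there exists an `(n, n-1, c_R, ν, n/2-1, 2^K, q)`
multi-version code with side information with storage cost `log₂ q = K/(c - 2(ν-1))`. -/
theorem construction_two (n cR ν c : ℕ) [NeZero n] (hn : 4 ≤ n) (heven : Even n)
    (hν : 2 ≤ ν) (hcR2 : 2 ≤ cR) (hcRn : cR ≤ n - 1) (hc : c = cR - 1)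
    (hcν : 2 * ν - 1 ≤ c) :
    ∃ K0 : ℕ, ∀ K : ℕ, K0 ≤ K → (c - 2 * (ν - 1)) ∣ K →
      Nonempty (MVCode n (n - 1) cR ν (n / 2 - 1) K (2 ^ (K / (c - 2 * (ν - 1))))) := by
  classical
  set k := c - 2 * (ν - 1) with hk
  have hkpos : 0 < k := by omega
  refine ⟨k * n, ?_⟩
  rintro K hK ⟨m, rfl⟩
  have hm : n ≤ m := Nat.le_of_mul_le_mul_left hK hkpos
  rw [Nat.mul_div_cancel_left m hkpos]
  obtain ⟨code, hcode⟩ := exists_mds n k m hm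
  let enc : ZMod n → (ZMod n → Finset (Fin ν)) → (Fin ν → (Fin (k * m) → Bool)) → Fin (2 ^ m) :=
    fun i S W => if h : (cand n ν S i).Nonempty then code i (W ((cand n ν S i).max' h))
      else code i (fun _ => false)
  let comp : (ZMod n → Finset (Fin ν)) → Finset (Fin ν) :=
    fun S => Finset.univ.filter (fun u => n - 1 ≤ (received n ν S u).card)
  let good : (ZMod n → Finset (Fin ν)) → Finset (ZMod n) → (ZMod n → Fin (2 ^ m)) →
      (Fin (k * m) → Bool) → Prop :=
    fun S T X w => ∀ j ∈ T, (cand n ν S j).max = (comp S).max → code j w = X j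
  let dec : (ZMod n → Finset (Fin ν)) → Finset (ZMod n) → (ZMod n → Fin (2 ^ m)) →
      Option (Fin (k * m) → Bool) :=
    fun S T X => if (comp S).Nonempty then
        (if h : ∃ w, good S T X w then some h.choose else none) else none
  refine ⟨⟨enc, dec, ?_, ?_, ?_, ?_, ?_⟩⟩
  · intro i S S' W h
    simp only [enc, cand_local n ν hn heven S S' i h]
  · intro i S W W' h
    simp only [enc]
    split_ifs with hne
    · rw [h _ (Finset.mem_filter.1 ((cand n ν S i).max'_mem hne)).1]
    · rfl
  · intro S T X X' h
    have hg : good S T X = good S T X' := by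
      funext w
      apply propext
      constructor
      · intro hw j hj hh
        rw [hw j hj hh, h j hj]
      · intro hw j hj hh
        rw [hw j hj hh, h j hj]
    simp only [dec, hg]
  · rintro S W T hT ⟨u0, hu0⟩
    have hne : (comp S).Nonempty := ⟨u0, Finset.mem_filter.2 ⟨Finset.mem_univ _, hu0⟩⟩
    have hLmem := (comp S).max'_mem hne
    have hLmax : (comp S).max = (((comp S).max' hne : Fin ν) : WithBot (Fin ν)) :=
      (Finset.coe_max' hne).symm
    set L := (comp S).max' hne with hLdef
    have hmax : ∀ u, n - 1 ≤ (received n ν S u).card → u ≤ L := by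
      intro u hu
      exact (comp S).le_max' u (Finset.mem_filter.2 ⟨Finset.mem_univ _, hu⟩)
    have hL : n - 1 ≤ (received n ν S L).card := (Finset.mem_filter.1 hLmem).2
    refine ⟨L, hmax, ?_⟩
    have hWg : good S T (fun j => enc j S W) (W L) := by
      intro j hj hh
      rw [hLmax] at hh
      have hLc : L ∈ cand n ν S j := Finset.mem_of_max hh
      have hcn : (cand n ν S j).Nonempty := ⟨L, hLc⟩
      have : (cand n ν S j).max' hcn = L := by
        have h' := Finset.coe_max' hcn
        rw [hh] at h'
        exact_mod_cast h'
      simp only [enc, dif_pos hcn, this]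
    have hex : ∃ w, good S T (fun j => enc j S W) w := ⟨_, hWg⟩
    simp only [dec, if_pos hne, dif_pos hex]
    congr 1
    have hcs := card_store n ν cR hn heven S L hL hmax T hT
    apply hcode _ _ _ ((by omega : k ≤ cR - 1 - 2 * (ν - 1)).trans hcs)
    intro j hj
    obtain ⟨hjT, hjm⟩ := Finset.mem_filter.1 hj
    rw [hex.choose_spec j hjT (hjm.trans hLmax.symm), hWg j hjT (hjm.trans hLmax.symm)]
  · intro S W T hT h
    have hne : ¬ (comp S).Nonempty := by
      rintro ⟨u, hu⟩
      have h1 := (Finset.mem_filter.1 hu).2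
      have h2 := h u
      omega
    simp only [dec, if_neg hne]
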